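/- arXiv:2212.08721 — 10 statements merged into one kernel-verified Lean document; each statement's English description precedes it below -/
import Mathlib

section
/- Let 𝒞 be a weak hierarchy on a finite nonempty set V satisfying axiom (I). Then 𝒞 satisfies axiom (WP). -/
namespace TransitPaper

variable {V : Type*}

/-- Transit function axioms (t1), (t2), (t3). -/
def IsTransit (R : V → V → Set V) : Prop :=
  (∀ u v, u ∈ R u v) ∧ (∀ u v, R u v = R v u) ∧ (∀ u : V, R u u = {u})

/-- Monotonicity axiom (m). -/
def IsMonotone (R : V → V → Set V) : Prop :=
  ∀ u v p q, p ∈ R u v → q ∈ R u v → R p q ⊆ R u v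

/-- Two sets overlap: A ∩ B, A \ B, B \ A all nonempty. -/
def Ovl (A B : Set V) : Prop :=
  (A ∩ B).Nonempty ∧ (A \ B).Nonempty ∧ (B \ A).Nonempty

/-- The system of transit sets 𝒞_R. -/
def transitSets (R : V → V → Set V) : Set (Set V) :=
  {S | ∃ x y, S = R x y}

/-- S is an interval with respect to the order `lt`. -/
def IsIntervalWrt (lt : V → V → Prop) (S : Set V) : Prop :=
  ∀ x ∈ S, ∀ y ∈ S, ∀ w, lt x w → lt w y → w ∈ S

/-- R is pyramidal: monotone and there is a total order making all transit sets intervals. -/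
def IsPyramidal (R : V → V → Set V) : Prop :=
  IsMonotone R ∧ ∃ lt : V → V → Prop, IsStrictTotalOrder V lt ∧
    ∀ u v, IsIntervalWrt lt (R u v)

def AxUC (R : V → V → Set V) : Prop :=
  ∀ x y u v : V, (R x y ∩ R u v).Nonempty →
    ∃ p ∈ R x y ∪ R u v, ∃ q ∈ R x y ∪ R u v, R x y ∪ R u v = R p q

def AxU (R : V → V → Set V) : Prop :=
  ∀ u v z : V, z ∈ R u v → R u v = R u z ∪ R z v

def AxW (R : V → V → Set V) : Prop :=
  ∀ x y z : V, z ∈ R x y ∨ y ∈ R x z ∨ x ∈ R y z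

def AxWP (R : V → V → Set V) : Prop :=
  ∀ u v x y p q : V, (R u v ∩ R x y).Nonempty → (R u v ∩ R p q).Nonempty →
    (R x y ∩ R p q).Nonempty →
    R p q ⊆ R u v ∪ R x y ∨ R u v ⊆ R p q ∪ R x y ∨ R x y ⊆ R p q ∪ R u v

def AxI (R : V → V → Set V) : Prop :=
  ∀ x y u v p q : V, (R x y ∩ R u v).Nonempty → R x y ∩ R u v ⊆ R p q →
    (R p q \ (R x y ∪ R u v)).Nonempty → R x y ⊆ R p q ∨ R u v ⊆ R p q

def AxO' (R : V → V → Set V) : Prop :=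
  ∀ u v : V, ∀ z ∈ R u v, ∃ p ∈ R u v, ∃ q ∈ R u v, R p z ∪ R z q = R u v

def AxL1 (R : V → V → Set V) : Prop :=
  ∀ x y p q u v : V, Ovl (R x y) (R p q) → Ovl (R p q) (R u v) →
    R x y ⊆ R u v ∨ R u v ⊆ R x y ∨
      (R x y ∩ R u v ⊆ R p q ∧ R p q ⊆ R x y ∪ R u v)

def AxL2 (R : V → V → Set V) : Prop :=
  ∀ x y p q u v : V, Ovl (R x y) (R p q) → Ovl (R p q) (R u v) →
    R x y ∩ R u v = ∅ →
    ∃ s ∈ R x y \ R p q, ∃ t ∈ R u v \ R p q,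
      R x y ∪ R p q ∪ R u v = R s t

def AxN3O (R : V → V → Set V) : Prop :=
  ∀ x y p q u v : V, Ovl (R x y) (R p q) → Ovl (R p q) (R u v) →
    R x y ⊆ R u v ∨ R u v ⊆ R x y ∨ R x y ∩ R u v = ∅

def AxU3 (R : V → V → Set V) : Prop :=
  ∀ x y : V, ¬ R x y ⊆ {x, y} →
    ∃ z ∈ R x y, z ≠ x ∧ z ≠ y ∧ R x z ∪ R z y = R x y

def AxB3 (R : V → V → Set V) : Prop :=
  ∀ u v x y : V, x ∈ R u v → y ∈ R u x → x ∈ R y v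

def AxB4 (R : V → V → Set V) : Prop :=
  ∀ u v x : V, x ∈ R u v → R u x ∩ R x v = {x}

def AxTB (R : V → V → Set V) : Prop :=
  ∀ W : Finset V, 3 ≤ W.card →
    ∃ x ∈ W, ∀ u ∈ W, ∀ v ∈ W, R x u ⊆ R x v ∨ R x v ⊆ R x u

def AxHC (R : V → V → Set V) : Prop :=
  ∀ W : Finset V, 3 ≤ W.card →
    ∃ x ∈ W, ∃ y ∈ W, x ≠ y ∧
      ∀ u ∈ W, ∀ v ∈ W,
        (R x u ⊆ R x v ∨ R x v ⊆ R x u) ∧ (R y u ⊆ R y v ∨ R y v ⊆ R y u)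

def AxTB' (R : V → V → Set V) : Prop :=
  ∀ n : ℕ, 3 ≤ n → ∀ v : ZMod n → V,
    (∀ k : ZMod n, v (k - 1) ∉ R (v k) (v (k + 1)) ∧
      v (k + 1) ∉ R (v (k - 1)) (v k)) →
    ∃ j i : ZMod n, i ≠ j ∧ i ≠ j - 1 ∧ v j ∈ R (v i) (v (i + 1))

def AxP2 (R : V → V → Set V) : Prop :=
  ∀ x y u v p q s t : V,
    Ovl (R x y) (R s t) → Ovl (R u v) (R s t) → Ovl (R p q) (R s t) →
    R x y ⊆ R u v ∪ R p q ∪ R s t ∨ R u v ⊆ R x y ∪ R p q ∪ R s t ∨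
      R p q ⊆ R x y ∪ R u v ∪ R s t

def AxP3 (R : V → V → Set V) : Prop :=
  ∀ x y u v p q s t : V,
    Ovl (R x y) (R u v) → Ovl (R x y) (R p q) → Ovl (R x y) (R s t) →
    R p q ⊆ R u v → R s t ⊆ R u v → (R p q ∩ R s t).Nonempty

def AxP4 (R : V → V → Set V) : Prop :=
  ∀ n : ℕ, 3 ≤ n → ∀ (u v y : V) (x : ℕ → V),
    (∀ i j : ℕ, 1 ≤ i → i ≤ n → 1 ≤ j → j + 1 ≤ n → j ≠ i - 1 → j ≠ i →
      x i ∉ R (x j) (x (j + 1))) →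
    (R u v ∩ R (x 1) (x 2)).Nonempty →
    (R u v ∩ R (x (n - 1)) (x n)).Nonempty →
    (∀ i : ℕ, 1 ≤ i → i + 1 ≤ n → y ∈ R u v \ R (x i) (x (i + 1))) →
    R (x 1) (x 2) ⊆ R u v ∨ R (x (n - 1)) (x n) ⊆ R u v

/-- A weak β-cycle in a set system 𝒞. -/
def HasWeakBetaCycle (𝒞 : Set (Set V)) : Prop :=
  ∃ n : ℕ, 3 ≤ n ∧ ∃ (C : ZMod n → Set V) (x : ZMod n → V),
    (∀ i, C i ∈ 𝒞) ∧ (∀ i, x i ∈ C i ∧ x i ∈ C (i + 1)) ∧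
    (∀ i k : ZMod n, k ≠ i → k ≠ i + 1 → x i ∉ C k)

def TotallyBalanced (𝒞 : Set (Set V)) : Prop := ¬ HasWeakBetaCycle 𝒞

/-- A pure cycle: a weak β-cycle with nonconsecutive sets disjoint. -/
def HasPureCycle (𝒞 : Set (Set V)) : Prop :=
  ∃ n : ℕ, 3 ≤ n ∧ ∃ (C : ZMod n → Set V) (x : ZMod n → V),
    (∀ i, C i ∈ 𝒞) ∧ (∀ i, x i ∈ C i ∧ x i ∈ C (i + 1)) ∧
    (∀ i k : ZMod n, k ≠ i → k ≠ i + 1 → x i ∉ C k) ∧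
    (∀ i j : ZMod n, j ≠ i - 1 → j ≠ i → j ≠ i + 1 → C i ∩ C j = ∅)

def HasGammaTriangle (𝒞 : Set (Set V)) : Prop :=
  ∃ C₁ C₂ C₃ : Set V, C₁ ∈ 𝒞 ∧ C₂ ∈ 𝒞 ∧ C₃ ∈ 𝒞 ∧
    (C₁ ∩ C₂).Nonempty ∧ (C₁ ∩ C₃).Nonempty ∧ (C₂ ∩ C₃).Nonempty ∧
    ∃ u ∈ C₃, ∃ w ∈ C₃, u ∈ C₁ \ C₂ ∧ w ∈ C₂ \ C₁

def GammaAcyclic (𝒞 : Set (Set V)) : Prop :=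
  ¬ HasPureCycle 𝒞 ∧ ¬ HasGammaTriangle 𝒞

def IsHierarchy (𝒞 : Set (Set V)) : Prop :=
  Set.univ ∈ 𝒞 ∧ (∀ x : V, {x} ∈ 𝒞) ∧
    ∀ A ∈ 𝒞, ∀ B ∈ 𝒞, A ∩ B = A ∨ A ∩ B = B ∨ A ∩ B = ∅

def WeakHierarchy (𝒞 : Set (Set V)) : Prop :=
  ∀ A ∈ 𝒞, ∀ B ∈ 𝒞, ∀ C ∈ 𝒞,
    A ∩ B ∩ C = A ∩ B ∨ A ∩ B ∩ C = A ∩ C ∨ A ∩ B ∩ C = B ∩ C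

def AxWPSet (𝒞 : Set (Set V)) : Prop :=
  ∀ A ∈ 𝒞, ∀ B ∈ 𝒞, ∀ C ∈ 𝒞,
    (A ∩ B).Nonempty → (A ∩ C).Nonempty → (B ∩ C).Nonempty →
    A ⊆ B ∪ C ∨ B ⊆ A ∪ C ∨ C ⊆ A ∪ B

def AxISet (𝒞 : Set (Set V)) : Prop :=
  ∀ A ∈ 𝒞, ∀ B ∈ 𝒞, ∀ C ∈ 𝒞,
    (A ∩ B).Nonempty → A ∩ B ⊆ C → (C \ (A ∪ B)).Nonempty →
    A ⊆ C ∨ B ⊆ C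

def AxL1Set (𝒞 : Set (Set V)) : Prop :=
  ∀ A ∈ 𝒞, ∀ B ∈ 𝒞, ∀ C ∈ 𝒞, Ovl A B → Ovl B C →
    A ⊆ C ∨ C ⊆ A ∨ (A ∩ C ⊆ B ∧ B ⊆ A ∪ C)

def AxN3OSet (𝒞 : Set (Set V)) : Prop :=
  ∀ A ∈ 𝒞, ∀ B ∈ 𝒞, ∀ C ∈ 𝒞, Ovl A B → Ovl B C → ¬ Ovl A C

def AxL2'Set (𝒞 : Set (Set V)) : Prop :=
  ∀ A ∈ 𝒞, ∀ B ∈ 𝒞, ∀ C ∈ 𝒞, Ovl A B → Ovl B C → A ∩ C = ∅ →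
    A ∪ B ∪ C ∈ 𝒞

def AxL2''Set (𝒞 : Set (Set V)) : Prop :=
  ∀ A ∈ 𝒞, ∀ B ∈ 𝒞, ∀ C ∈ 𝒞, ∀ D ∈ 𝒞, Ovl A B → Ovl B C → A ∩ C = ∅ →
    (A ∪ C) \ B ⊆ D → A ∪ B ∪ C ⊆ D

/-- A weak hierarchy satisfying (I) satisfies (WP). -/
theorem stmt_10 {V : Type*} [Fintype V] [Nonempty V] (𝒞 : Set (Set V))
    (hne : ∀ C ∈ 𝒞, C.Nonempty) (hwh : WeakHierarchy 𝒞) (hI : AxISet 𝒞) :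
    AxWPSet 𝒞 := by
  intro A hA B hB C hC hAB hAC hBC
  -- By the weak hierarchy property some two of the sets meet inside the third. If that third set
  -- is not covered by the two, (I) puts one of the two inside it, and hence inside the other union.
  rcases hwh A hA B hB C hC with h | h | h
  · by_cases hsub : C ⊆ A ∪ B
    · exact .inr (.inr hsub)
    · rcases hI A hA B hB C hC hAB (Set.inter_eq_left.mp h) (Set.not_subset.mp hsub) with h' | h'
      · exact .inl (Set.subset_union_of_subset_right h' B)
      · exact .inr (.inl (Set.subset_union_of_subset_right h' A))
  · by_cases hsub : B ⊆ A ∪ C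
    · exact .inr (.inl hsub)
    · have hACB : A ∩ C ⊆ B := fun x hx => (h.ge hx).1.2
      rcases hI A hA C hC B hB hAC hACB (Set.not_subset.mp hsub) with h' | h'
      · exact .inl (Set.subset_union_of_subset_left h' C)
      · exact .inr (.inr (Set.subset_union_of_subset_right h' A))
  · by_cases hsub : A ⊆ B ∪ C
    · exact .inl hsub
    · have hBCA : B ∩ C ⊆ A := fun x hx => (h.ge hx).1.1
      rcases hI B hB C hC A hA hBC hBCA (Set.not_subset.mp hsub) with h' | h'
      · exact .inr (.inl (Set.subset_union_of_subset_left h' C))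
      · exact .inr (.inr (Set.subset_union_of_subset_left h' B))

end TransitPaper
end

section
/- Let 𝒞 be a set system on a finite nonempty set V satisfying axiom (L1). Then 𝒞 satisfies axiom (WP). -/
namespace TransitPaper

variable {V : Type*}

/-- A set system satisfying (L1) satisfies (WP). -/
theorem stmt_11 {V : Type*} [Fintype V] [Nonempty V] (𝒞 : Set (Set V))
    (hne : ∀ C ∈ 𝒞, C.Nonempty) (hl1 : AxL1Set 𝒞) :
    AxWPSet 𝒞 := by
  intro A hA B hB C hC hAB hAC hBC
  by_contra! h
  obtain ⟨h1, h2, h3⟩ := h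
  obtain ⟨a, ha, naBC⟩ := Set.not_subset.1 h1
  obtain ⟨b, hb, nbAC⟩ := Set.not_subset.1 h2
  obtain ⟨c, hc, ncAB⟩ := Set.not_subset.1 h3
  simp only [Set.mem_union, not_or] at naBC nbAC ncAB
  -- The private points `a`, `b`, `c` of the three sets make the sets overlap pairwise,
  -- and they also refute each of the three alternatives of (L1).
  have oAB : Ovl A B := ⟨hAB, ⟨a, ha, naBC.1⟩, ⟨b, hb, nbAC.1⟩⟩
  have oBC : Ovl B C := ⟨hBC, ⟨b, hb, nbAC.2⟩, ⟨c, hc, ncAB.2⟩⟩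
  rcases hl1 A hA B hB C hC oAB oBC with h | h | h
  · exact naBC.2 (h ha)
  · exact ncAB.1 (h hc)
  · exact h2 h.2

end TransitPaper
end

section
/- Let 𝒞 be a set system on a finite nonempty set V satisfying axiom (L1). Then 𝒞 is a weak hierarchy. -/
namespace TransitPaper

variable {V : Type*}

/-- A set system satisfying (L1) is a weak hierarchy. -/
theorem stmt_12 {V : Type*} [Fintype V] [Nonempty V] (𝒞 : Set (Set V))
    (hne : ∀ C ∈ 𝒞, C.Nonempty) (hl1 : AxL1Set 𝒞) :
    WeakHierarchy 𝒞 := by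
  intro A hA B hB C hC
  by_contra! h
  obtain ⟨h₁, h₂, h₃⟩ := h
  -- If `A ∩ B ∩ C` is none of the pairwise intersections, each of these has a point outside
  -- the third set; these points make `A, B` and `B, C` overlap and refute every case of (L1).
  obtain ⟨x, ⟨hxA, hxB⟩, hxC⟩ : ∃ x ∈ A ∩ B, x ∉ C := by
    by_contra! h
    exact h₁ (Set.inter_eq_left.2 h)
  obtain ⟨y, ⟨hyA, hyC⟩, hyB⟩ : ∃ y ∈ A ∩ C, y ∉ B := by
    by_contra! h
    exact h₂ (by rw [Set.inter_right_comm]; exact Set.inter_eq_left.2 h)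
  obtain ⟨z, ⟨hzB, hzC⟩, hzA⟩ : ∃ z ∈ B ∩ C, z ∉ A := by
    by_contra! h
    exact h₃ (by rw [Set.inter_assoc]; exact Set.inter_eq_right.2 h)
  rcases hl1 A hA B hB C hC ⟨⟨x, hxA, hxB⟩, ⟨y, hyA, hyB⟩, ⟨z, hzB, hzA⟩⟩
    ⟨⟨z, hzB, hzC⟩, ⟨x, hxB, hxC⟩, ⟨y, hyC, hyB⟩⟩ with hAC | hCA | ⟨hACB, -⟩
  · exact hxC (hAC hxA)
  · exact hzA (hCA hzC)
  · exact hyB (hACB ⟨hyA, hyC⟩)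

end TransitPaper
end

section
/- Let 𝒞 be a set system on a finite nonempty set V. If 𝒞 satisfies axiom (L1), then 𝒞 satisfies axiom (N3O). -/
namespace TransitPaper

variable {V : Type*}

/-- A set system satisfying (L1) satisfies (N3O). -/
theorem stmt_13 {V : Type*} [Fintype V] [Nonempty V] (𝒞 : Set (Set V))
    (hne : ∀ C ∈ 𝒞, C.Nonempty) (hl1 : AxL1Set 𝒞) :
    AxN3OSet 𝒞 := by
  intro A hA B hB C hC hAB hBC hAC
  have hBA : Ovl B A := ⟨Set.inter_comm A B ▸ hAB.1, hAB.2.2, hAB.2.1⟩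
  -- Overlapping sets are incomparable, so (L1) always yields its third alternative.
  have key : ∀ X ∈ 𝒞, ∀ Y ∈ 𝒞, ∀ Z ∈ 𝒞, Ovl X Y → Ovl Y Z → Ovl X Z →
      X ∩ Z ⊆ Y ∧ Y ⊆ X ∪ Z := by
    intro X hX Y hY Z hZ hXY hYZ hXZ
    rcases hl1 X hX Y hY Z hZ hXY hYZ with h | h | h
    · exact absurd h (Set.sdiff_nonempty.mp hXZ.2.1)
    · exact absurd h (Set.sdiff_nonempty.mp hXZ.2.2)
    · exact h
  -- A point of `A \ B` lies in `C` because `A ⊆ B ∪ C`, hence in `A ∩ C ⊆ B`.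
  obtain ⟨x, hxA, hxB⟩ := hAB.2.1
  have hxC : x ∈ C := ((key B hB A hA C hC hBA hAC hBC).2 hxA).resolve_left hxB
  exact hxB ((key A hA B hB C hC hAB hBC hAC).1 ⟨hxA, hxC⟩)

end TransitPaper
end

section
/- Let R be a monotone transit function on a finite nonempty set V satisfying axiom (n3o). Then R satisfies both axiom (w) and axiom (wp). -/
/-!
If (w) failed for `x, y, z`, the sets `R x y`, `R y z`, `R x z` would overlap pairwise; if (wp)
failed for three pairwise intersecting transit sets, each would have a point in neither of the
other two, so again they would overlap pairwise. Axiom (n3o) excludes both (`not_pairwise_ovl`).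
-/

namespace TransitPaper

variable {V : Type*}

/-- Axiom (n3o) says exactly that no three transit sets overlap pairwise. -/
theorem not_pairwise_ovl {R : V → V → Set V} (h : AxN3O R) {x y p q u v : V}
    (h₁ : Ovl (R x y) (R p q)) (h₂ : Ovl (R p q) (R u v)) : ¬ Ovl (R x y) (R u v) := by
  rintro ⟨hne, hl, hr⟩
  rcases h x y p q u v h₁ h₂ with hs | hs | hs
  · exact Set.sdiff_nonempty.mp hl hs
  · exact Set.sdiff_nonempty.mp hr hs
  · exact hne.ne_empty hs

/-- A monotone transit function satisfying (n3o) satisfies (w)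
and (wp). -/
theorem stmt_14 {V : Type*} [Fintype V] [Nonempty V] (R : V → V → Set V)
    (htf : IsTransit R) (hm : IsMonotone R) (hn3o : AxN3O R) :
    AxW R ∧ AxWP R := by
  obtain ⟨t1, t2, -⟩ := htf
  have t1' : ∀ u v, v ∈ R u v := fun u v => t2 v u ▸ t1 v u
  constructor
  · intro x y z
    by_contra! hc
    obtain ⟨hz, hy, hx⟩ := hc
    -- `R x y`, `R y z`, `R x z` share endpoints pairwise, and each misses the third point.
    exact not_pairwise_ovl hn3o (x := x) (y := y) (p := y) (q := z) (u := x) (v := z)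
      ⟨⟨y, t1' x y, t1 y z⟩, ⟨x, t1 x y, hx⟩, ⟨z, t1' y z, hz⟩⟩
      ⟨⟨z, t1' y z, t1' x z⟩, ⟨y, t1 y z, hy⟩, ⟨x, t1 x z, hx⟩⟩
      ⟨⟨x, t1 x y, t1 x z⟩, ⟨y, t1' x y, hy⟩, ⟨z, t1' x z, hz⟩⟩
  · intro u v x y p q hux hup hxp
    by_contra! hc
    simp only [Set.not_subset, Set.mem_union, not_or] at hc
    -- Each of the three sets has a point private to it.
    obtain ⟨⟨a, ha, hau, hax⟩, ⟨b, hb, hbp, hbx⟩, ⟨c, hc, hcp, hcu⟩⟩ := hc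
    exact not_pairwise_ovl hn3o
      ⟨hux, ⟨b, hb, hbx⟩, ⟨c, hc, hcu⟩⟩
      ⟨hxp, ⟨c, hc, hcp⟩, ⟨a, ha, hax⟩⟩
      ⟨hup, ⟨b, hb, hbp⟩, ⟨a, ha, hau⟩⟩

end TransitPaper
end

section
/- Let R be a monotone transit function on a finite nonempty set V satisfying axioms (w) and (l2). Then the system of transit sets 𝒞_R is a weak hierarchy satisfying axioms (L2') and (L2''). -/
/-!
If `A`, `B`, `C` violated the weak hierarchy condition, there would be points
`a ∈ (A ∩ B) \ C`, `b ∈ (A ∩ C) \ B` and `c ∈ (B ∩ C) \ A`. Axiom (w) puts one of them into the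
transit set of the other two, which by monotonicity lies in the set that this point avoids.
(L2') is (l2) with the endpoints forgotten. For (L2''), the endpoints `s ∈ A \ B` and `t ∈ C \ B`
given by (l2) lie in `D`, so `A ∪ B ∪ C = R s t ⊆ D` by monotonicity.
-/

namespace TransitPaper

variable {V : Type*}

/-- If a monotone transit function satisfies (w) and (l2), then
𝒞_R is a weak hierarchy satisfying (L2') and (L2''). -/
theorem stmt_15 {V : Type*} [Fintype V] [Nonempty V] (R : V → V → Set V)
    (htf : IsTransit R) (hm : IsMonotone R) (hw : AxW R) (hl2 : AxL2 R) :
    WeakHierarchy (transitSets R) ∧ AxL2'Set (transitSets R) ∧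
      AxL2''Set (transitSets R) := by
  refine ⟨?_, ?_, ?_⟩
  · rintro A ⟨x, y, rfl⟩ B ⟨p, q, rfl⟩ C ⟨u, v, rfl⟩
    by_contra! h
    obtain ⟨h1, h2, h3⟩ := h
    -- A failing triple yields one point in each pairwise intersection that avoids the third set.
    have key : ∀ S T : Set V, S ≠ T → S ⊆ T → ∃ a ∈ T, a ∉ S := fun S T hne hST =>
      Set.exists_of_ssubset (hST.ssubset_of_ne hne)
    obtain ⟨a, ha, ha'⟩ := key _ _ h1 (fun z hz => hz.1)
    obtain ⟨b, hb, hb'⟩ := key _ _ h2 (fun z hz => ⟨hz.1.1, hz.2⟩)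
    obtain ⟨c, hc, hc'⟩ := key _ _ h3 (fun z hz => ⟨hz.1.2, hz.2⟩)
    rcases hw a b c with h | h | h
    · exact hc' ⟨⟨hm x y a b ha.1 hb.1 h, hc.1⟩, hc.2⟩
    · exact hb' ⟨⟨hb.1, hm p q a c ha.2 hc.1 h⟩, hb.2⟩
    · exact ha' ⟨ha, hm u v b c hb.2 hc.2 h⟩
  · rintro A ⟨x, y, rfl⟩ B ⟨p, q, rfl⟩ C ⟨u, v, rfl⟩ hAB hBC hAC
    obtain ⟨s, -, t, -, hst⟩ := hl2 x y p q u v hAB hBC hAC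
    exact ⟨s, t, hst⟩
  · rintro A ⟨x, y, rfl⟩ B ⟨p, q, rfl⟩ C ⟨u, v, rfl⟩ D ⟨d, e, rfl⟩ hAB hBC hAC hD
    obtain ⟨s, hs, t, ht, hst⟩ := hl2 x y p q u v hAB hBC hAC
    rw [hst]
    exact hm d e s t (hD ⟨Or.inl hs.1, hs.2⟩) (hD ⟨Or.inr ht.1, ht.2⟩)

end TransitPaper
end

section
/- Let R be a monotone transit function on a finite nonempty set V satisfying axiom (uc). Then R satisfies axiom (l2). -/
/-!
Write `A = R x y`, `B = R p q`, `C = R u v`. Two applications of (uc) make `A ∪ B ∪ C` a transit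
set `R s t`, and by (uc) both `A ∪ B` and `B ∪ C` are transit sets, hence closed under `R` by
monotonicity. So `s, t` cannot both lie in `A ∪ B` (this would force `C ⊆ A ∪ B`, although
`A ∩ C = ∅` and `C` is not contained in `B`), nor both in `B ∪ C`. Thus one of them lies in
`C \ B` and the other in `A \ B`, and the symmetry of `R` takes care of their order.
-/

namespace TransitPaper

variable {V : Type*}

/-- A monotone transit function satisfying (uc) satisfies (l2). -/
theorem stmt_16 {V : Type*} [Fintype V] [Nonempty V] (R : V → V → Set V)
    (htf : IsTransit R) (hm : IsMonotone R) (huc : AxUC R) :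
    AxL2 R := by
  obtain ⟨-, hsymm, -⟩ := htf
  intro x y p q u v hAB hBC hdisj
  obtain ⟨⟨e, heA, heB⟩, ⟨a, haA, haB⟩, -⟩ := hAB
  obtain ⟨⟨f, hfB, hfC⟩, -, ⟨c, hcC, hcB⟩⟩ := hBC
  have hAC : ∀ z, z ∈ R x y → z ∉ R u v := fun z h₁ h₂ =>
    Set.notMem_empty z (hdisj ▸ ⟨h₁, h₂⟩)
  obtain ⟨a₁, -, b₁, -, h₁⟩ := huc x y p q ⟨e, heA, heB⟩
  obtain ⟨a₂, -, b₂, -, h₂⟩ := huc p q u v ⟨f, hfB, hfC⟩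
  obtain ⟨s, hs, t, ht, hst⟩ := huc a₁ b₁ u v ⟨f, h₁ ▸ Or.inr hfB, hfC⟩
  rw [← h₁] at hs ht hst
  have hn₁ : ¬ (s ∈ R x y ∪ R p q ∧ t ∈ R x y ∪ R p q) := by
    rintro ⟨h, h'⟩
    rw [h₁] at h h'
    have hc : c ∈ R x y ∪ R p q :=
      h₁ ▸ hm a₁ b₁ s t h h' (hst ▸ Or.inr hcC)
    exact hc.elim (fun h => hAC c h hcC) hcB
  have hn₂ : ¬ (s ∈ R p q ∪ R u v ∧ t ∈ R p q ∪ R u v) := by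
    rintro ⟨h, h'⟩
    rw [h₂] at h h'
    have ha : a ∈ R p q ∪ R u v :=
      h₂ ▸ hm a₂ b₂ s t h h' (hst ▸ Or.inl (Or.inl haA))
    exact ha.elim haB (hAC a haA)
  have key : (s ∈ R x y \ R p q ∧ t ∈ R u v \ R p q) ∨
      (t ∈ R x y \ R p q ∧ s ∈ R u v \ R p q) := by
    have hs' := hAC s
    have ht' := hAC t
    simp only [Set.mem_union, Set.mem_sdiff] at hs ht hn₁ hn₂ ⊢
    clear * - hs ht hn₁ hn₂ hs' ht'
    grind
  rcases key with ⟨h, h'⟩ | ⟨h, h'⟩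
  · exact ⟨s, h, t, h', hst⟩
  · exact ⟨t, h, s, h', hst.trans (hsymm s t)⟩

end TransitPaper
end

section
/- Let R be a monotone transit function on a finite nonempty set V satisfying axioms (l1) and (l2). Then the system of transit sets 𝒞_R is totally balanced, i.e., it contains no weak β-cycle. -/
/-!
The proof is a descent on the length `n` of a weak β-cycle `C₀, …, Cₙ₋₁` with vertices `x₀, …, xₙ₋₁`,
where `Cⱼ` contains `xⱼ` and `xⱼ₊₁` (cyclically) and no other vertex of the cycle.

Consecutive sets overlap, and for `n = 3` axiom (l1) applied to the three sets puts the vertex shared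
by two of them into the third, which is absurd. For `n ≥ 4`, (l1) gives `C₀ ∩ C₂ ⊆ C₁`.

* If some `z` lies in `C₀ ∩ C₂`, then `z` lies in no `Cₖ` with `k ≥ 3`: otherwise `R x₁ z ⊆ C₀ ∩ C₁`,
  `R x₂ z ⊆ C₁ ∩ C₂` and `R xₖ z ⊆ Cₖ` overlap pairwise, and (l1) forces `x₂` into the union of the
  first and the third. Hence dropping `C₁` and replacing `x₁, x₂` by `z` gives a cycle of length
  `n - 1`.
* If `C₀ ∩ C₂ = ∅`, then `C₀ ∪ C₁ ∪ C₂` is a transit set `R s t` by (l2). For `n ≥ 5` it replaces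
  the three sets and gives a cycle of length `n - 2`. For `n = 4`, (l1) gives `C₀ ⊆ C₁ ∪ C₃` and
  `C₂ ⊆ C₁ ∪ C₃`, so `s, t ∈ C₃` and `x₁ ∈ R s t ⊆ C₃`, a contradiction.
-/

namespace TransitPaper

variable {V : Type*}

/-- A weak β-cycle of length `n` indexed by the natural numbers below `n`, with `C j` containing
exactly the cycle vertices `x j` and `x (j + 1)`, where `x n` is read as `x 0`. -/
def IsCyc (R : V → V → Set V) (n : ℕ) (C : ℕ → Set V) (x : ℕ → V) : Prop :=
  (∀ j < n, C j ∈ transitSets R) ∧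
    ∀ j < n, ∀ k < n, (x k ∈ C j ↔ k = j ∨ k = j + 1 ∨ (k = 0 ∧ j + 1 = n))

theorem ovl_of {A B : Set V} {p q r : V} (hpA : p ∈ A) (hpB : p ∈ B) (hqA : q ∈ A) (hqB : q ∉ B)
    (hrB : r ∈ B) (hrA : r ∉ A) : Ovl A B :=
  ⟨⟨p, hpA, hpB⟩, ⟨q, hqA, hqB⟩, ⟨r, hrB, hrA⟩⟩

theorem l1_sets {R : V → V → Set V} (hl1 : AxL1 R) {A B C : Set V} (hA : A ∈ transitSets R)
    (hB : B ∈ transitSets R) (hC : C ∈ transitSets R) (hAB : Ovl A B) (hBC : Ovl B C)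
    {a c : V} (ha : a ∈ A) (haC : a ∉ C) (hc : c ∈ C) (hcA : c ∉ A) :
    (∀ v ∈ A, v ∈ C → v ∈ B) ∧ ∀ v ∈ B, v ∈ A ∨ v ∈ C := by
  obtain ⟨x, y, rfl⟩ := hA
  obtain ⟨p, q, rfl⟩ := hB
  obtain ⟨u, v, rfl⟩ := hC
  rcases hl1 x y p q u v hAB hBC with h | h | ⟨h, h'⟩
  · exact absurd (h ha) haC
  · exact absurd (h hc) hcA
  · exact ⟨fun v h1 h2 => h ⟨h1, h2⟩, fun v h1 => h' h1⟩

theorem mono_sets {R : V → V → Set V} (hm : IsMonotone R) {S : Set V} (hS : S ∈ transitSets R)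
    {p q : V} (hp : p ∈ S) (hq : q ∈ S) : ∀ v ∈ R p q, v ∈ S := by
  obtain ⟨u, v, rfl⟩ := hS
  exact hm u v p q hp hq

theorem l2_sets {R : V → V → Set V} (hl2 : AxL2 R) {A B C : Set V} (hA : A ∈ transitSets R)
    (hB : B ∈ transitSets R) (hC : C ∈ transitSets R) (hAB : Ovl A B) (hBC : Ovl B C)
    (hAC : A ∩ C = ∅) : ∃ s ∈ A, s ∉ B ∧ ∃ t ∈ C, t ∉ B ∧ A ∪ B ∪ C = R s t := by
  obtain ⟨x, y, rfl⟩ := hA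
  obtain ⟨p, q, rfl⟩ := hB
  obtain ⟨u, v, rfl⟩ := hC
  obtain ⟨s, hs, t, ht, h⟩ := hl2 x y p q u v hAB hBC hAC
  exact ⟨s, hs.1, hs.2, t, ht.1, ht.2, h⟩

/-- A point common to the three consecutive sets `C 0`, `C 1`, `C 2` lies in no other set of the
cycle. -/
theorem notMem_of_mem_three {R : V → V → Set V} (htf : IsTransit R) (hm : IsMonotone R)
    (hl1 : AxL1 R) {n : ℕ} (hn : 4 ≤ n) {C : ℕ → Set V} {x : ℕ → V} (h : IsCyc R n C x)
    {z : V} (hz0 : z ∈ C 0) (hz1 : z ∈ C 1) (hz2 : z ∈ C 2) {k : ℕ} (hk : 3 ≤ k) (hkn : k < n) :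
    z ∉ C k := by
  intro hzk
  obtain ⟨hC, hx⟩ := h
  have left : ∀ u, u ∈ R u z := fun u => htf.1 u z
  have right : ∀ u, z ∈ R u z := fun u => by rw [htf.2.1]; exact htf.1 z u
  have tr : ∀ u, R u z ∈ transitSets R := fun u => ⟨u, z, rfl⟩
  have sub : ∀ j < n, ∀ u ∈ C j, z ∈ C j → ∀ v ∈ R u z, v ∈ C j :=
    fun j hj u hu hz => mono_sets hm (hC j hj) hu hz
  have a1 : ∀ v ∈ R (x 1) z, v ∈ C 0 :=
    sub 0 (by omega) _ ((hx _ (by omega) _ (by omega)).2 (by omega)) hz0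
  have b1 : ∀ v ∈ R (x 1) z, v ∈ C 1 :=
    sub 1 (by omega) _ ((hx _ (by omega) _ (by omega)).2 (by omega)) hz1
  have a2 : ∀ v ∈ R (x 2) z, v ∈ C 1 :=
    sub 1 (by omega) _ ((hx _ (by omega) _ (by omega)).2 (by omega)) hz1
  have b2 : ∀ v ∈ R (x 2) z, v ∈ C 2 :=
    sub 2 (by omega) _ ((hx _ (by omega) _ (by omega)).2 (by omega)) hz2
  have ak : ∀ v ∈ R (x k) z, v ∈ C k :=
    sub k hkn _ ((hx _ (by omega) _ (by omega)).2 (by omega)) hzk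
  have x1k : x 1 ∉ R (x k) z := fun hv =>
    absurd ((hx k hkn 1 (by omega)).1 (ak _ hv)) (by omega)
  have x2k : x 2 ∉ R (x k) z := fun hv =>
    absurd ((hx k hkn 2 (by omega)).1 (ak _ hv)) (by omega)
  have xk1 : x k ∉ R (x 1) z := fun hv =>
    absurd ((hx 1 (by omega) k hkn).1 (b1 _ hv)) (by omega)
  have xk2 : x k ∉ R (x 2) z := fun hv =>
    absurd ((hx 1 (by omega) k hkn).1 (a2 _ hv)) (by omega)
  have x12 : x 1 ∉ R (x 2) z := fun hv =>
    absurd ((hx 2 (by omega) 1 (by omega)).1 (b2 _ hv)) (by omega)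
  have x21 : x 2 ∉ R (x 1) z := fun hv =>
    absurd ((hx 0 (by omega) 2 (by omega)).1 (a1 _ hv)) (by omega)
  have key := (l1_sets hl1 (tr (x k)) (tr (x 2)) (tr (x 1))
    (ovl_of (right _) (right _) (left _) xk2 (left _) x2k)
    (ovl_of (right _) (right _) (left _) x21 (left _) x12)
    (left _) xk1 (left _) x1k).2 (x 2) (left _)
  exact key.elim x2k x21

/-- Dropping `C 1` and replacing `x 1`, `x 2` by a point `z` of `C 0 ∩ C 2` that lies in no later
set of the cycle. -/
theorem IsCyc.contract {R : V → V → Set V} {n : ℕ} (hn : 4 ≤ n) {C : ℕ → Set V} {x : ℕ → V}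
    (h : IsCyc R n C x) {z : V} (hz0 : z ∈ C 0) (hz2 : z ∈ C 2)
    (hz : ∀ k, 3 ≤ k → k < n → z ∉ C k) :
    IsCyc R (n - 1) (fun j => if j = 0 then C 0 else C (j + 1))
      (fun j => if j = 0 then x 0 else if j = 1 then z else x (j + 1)) := by
  obtain ⟨hC, hx⟩ := h
  refine ⟨fun j hj => ?_, fun j hj k hk => ?_⟩
  · dsimp only
    split_ifs
    · exact hC _ (by omega)
    · exact hC _ (by omega)
  · dsimp only
    by_cases hk1 : k = 1
    · subst hk1
      by_cases hj0 : j = 0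
      · simp [hj0, hz0]
      · by_cases hj1 : j = 1
        · simp [hj1, hz2]
        · have := hz (j + 1) (by omega) (by omega)
          rw [if_neg hj0, if_neg one_ne_zero, if_pos rfl]
          exact iff_of_false this (by omega)
    · split_ifs <;> rw [hx _ (by omega) _ (by omega)] <;> omega

/-- Replacing `C 0`, `C 1`, `C 2` by their union. -/
theorem IsCyc.merge {R : V → V → Set V} {n : ℕ} (hn : 5 ≤ n) {C : ℕ → Set V} {x : ℕ → V}
    (h : IsCyc R n C x) (hU : C 0 ∪ C 1 ∪ C 2 ∈ transitSets R) :
    IsCyc R (n - 2) (fun j => if j = 0 then C 0 ∪ C 1 ∪ C 2 else C (j + 2))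
      (fun j => if j = 0 then x 0 else x (j + 2)) := by
  obtain ⟨hC, hx⟩ := h
  refine ⟨fun j hj => ?_, fun j hj k hk => ?_⟩
  · dsimp only
    split_ifs
    · exact hU
    · exact hC _ (by omega)
  · have e0 := hx 0 (by omega)
    have e1 := hx 1 (by omega)
    have e2 := hx 2 (by omega)
    dsimp only
    split_ifs
    · simp only [Set.mem_union]
      rw [e0 _ (by omega), e1 _ (by omega), e2 _ (by omega)]; omega
    · simp only [Set.mem_union]
      rw [e0 _ (by omega), e1 _ (by omega), e2 _ (by omega)]; omega
    · rw [hx _ (by omega) _ (by omega)]; omega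
    · rw [hx _ (by omega) _ (by omega)]; omega

theorem not_isCyc {R : V → V → Set V} (htf : IsTransit R) (hm : IsMonotone R) (hl1 : AxL1 R)
    (hl2 : AxL2 R) (n : ℕ) : 3 ≤ n → ∀ C x, ¬ IsCyc R n C x := by
  induction n using Nat.strong_induction_on with
  | _ n ih =>
  intro hn C x h
  obtain ⟨hC, hx⟩ := id h
  have yes : ∀ j k, j < n → k < n → (k = j ∨ k = j + 1 ∨ (k = 0 ∧ j + 1 = n)) → x k ∈ C j :=
    fun j k hj hk => (hx j hj k hk).2
  have no : ∀ j k, j < n → k < n → ¬ (k = j ∨ k = j + 1 ∨ (k = 0 ∧ j + 1 = n)) → x k ∉ C j :=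
    fun j k hj hk hne hmem => hne ((hx j hj k hk).1 hmem)
  have o01 : Ovl (C 0) (C 1) := by
    apply ovl_of (p := x 1) (q := x 0) (r := x 2) <;>
      first | (apply yes <;> omega) | (apply no <;> omega)
  rcases Nat.lt_or_ge n 4 with hn4 | hn4
  · obtain rfl : n = 3 := by omega
    have o12 : Ovl (C 1) (C 2) := by
      apply ovl_of (p := x 2) (q := x 1) (r := x 0) <;>
        first | (apply yes <;> omega) | (apply no <;> omega)
    have key := (l1_sets hl1 (hC 0 (by omega)) (hC 1 (by omega)) (hC 2 (by omega)) o01 o12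
      (a := x 1) (c := x 2) (yes _ _ (by omega) (by omega) (by omega))
      (no _ _ (by omega) (by omega) (by omega)) (yes _ _ (by omega) (by omega) (by omega))
      (no _ _ (by omega) (by omega) (by omega))).1 (x 0)
      (yes _ _ (by omega) (by omega) (by omega)) (yes _ _ (by omega) (by omega) (by omega))
    exact no 1 0 (by omega) (by omega) (by omega) key
  have o12 : Ovl (C 1) (C 2) := by
    apply ovl_of (p := x 2) (q := x 1) (r := x 3) <;>
      first | (apply yes <;> omega) | (apply no <;> omega)
  have key := (l1_sets hl1 (hC 0 (by omega)) (hC 1 (by omega)) (hC 2 (by omega)) o01 o12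
    (a := x 0) (c := x 3) (yes _ _ (by omega) (by omega) (by omega))
    (no _ _ (by omega) (by omega) (by omega)) (yes _ _ (by omega) (by omega) (by omega))
    (no _ _ (by omega) (by omega) (by omega))).1
  rcases Set.eq_empty_or_nonempty (C 0 ∩ C 2) with he | ⟨z, hz0, hz2⟩
  · obtain ⟨s, hs0, hs1, t, ht2, ht1, hst⟩ :=
      l2_sets hl2 (hC 0 (by omega)) (hC 1 (by omega)) (hC 2 (by omega)) o01 o12 he
    rcases Nat.lt_or_ge n 5 with hn5 | hn5
    · obtain rfl : n = 4 := by omega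
      have o10 : Ovl (C 1) (C 0) := by
        apply ovl_of (p := x 1) (q := x 2) (r := x 0) <;>
          first | (apply yes <;> omega) | (apply no <;> omega)
      have o03 : Ovl (C 0) (C 3) := by
        apply ovl_of (p := x 0) (q := x 1) (r := x 3) <;>
          first | (apply yes <;> omega) | (apply no <;> omega)
      have o23 : Ovl (C 2) (C 3) := by
        apply ovl_of (p := x 3) (q := x 2) (r := x 0) <;>
          first | (apply yes <;> omega) | (apply no <;> omega)
      have hs3 : s ∈ C 3 := ((l1_sets hl1 (hC 1 (by omega)) (hC 0 (by omega)) (hC 3 (by omega))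
        o10 o03 (a := x 1) (c := x 3) (yes _ _ (by omega) (by omega) (by omega))
        (no _ _ (by omega) (by omega) (by omega)) (yes _ _ (by omega) (by omega) (by omega))
        (no _ _ (by omega) (by omega) (by omega))).2 s hs0).resolve_left hs1
      have ht3 : t ∈ C 3 := ((l1_sets hl1 (hC 1 (by omega)) (hC 2 (by omega)) (hC 3 (by omega))
        o12 o23 (a := x 1) (c := x 3) (yes _ _ (by omega) (by omega) (by omega))
        (no _ _ (by omega) (by omega) (by omega)) (yes _ _ (by omega) (by omega) (by omega))
        (no _ _ (by omega) (by omega) (by omega))).2 t ht2).resolve_left ht1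
      refine no 3 1 (by omega) (by omega) (by omega)
        (mono_sets hm (hC 3 (by omega)) hs3 ht3 _ ?_)
      rw [← hst]
      exact Or.inl (Or.inl (yes _ _ (by omega) (by omega) (by omega)))
    · exact ih (n - 2) (by omega) (by omega) _ _ (h.merge hn5 ⟨s, t, hst⟩)
  · refine ih (n - 1) (by omega) (by omega) _ _ (h.contract hn4 hz0 hz2 fun k hk hkn => ?_)
    exact notMem_of_mem_three htf hm hl1 hn4 h hz0 (key z hz0 hz2) hz2 hk hkn

/-- In `ZMod n`, the successor relation on residues is the cyclic successor on `{0, …, n - 1}`. -/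
theorem natCast_eq_succ_iff {n j k : ℕ} (hj : j < n) (hk : k < n) :
    (k : ZMod n) = (j : ZMod n) + 1 ↔ k = j + 1 ∨ (k = 0 ∧ j + 1 = n) := by
  rw [← Nat.cast_succ, ZMod.natCast_eq_natCast_iff', Nat.mod_eq_of_lt hk]
  rcases Nat.lt_or_ge (j + 1) n with h | h
  · rw [Nat.mod_eq_of_lt h]; omega
  · obtain rfl : j + 1 = n := by omega
    rw [Nat.mod_self]; omega

/-- If a monotone transit function satisfies (l1) and (l2), then
𝒞_R is totally balanced. -/
theorem stmt_17 {V : Type*} [Fintype V] [Nonempty V] (R : V → V → Set V)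
    (htf : IsTransit R) (hm : IsMonotone R) (hl1 : AxL1 R) (hl2 : AxL2 R) :
    TotallyBalanced (transitSets R) := by
  rintro ⟨n, hn, C, x, hC, hmem, hnot⟩
  -- The set `C (j + 1)` is the one containing `x j` and `x (j + 1)`, hence the shift.
  refine not_isCyc htf hm hl1 hl2 n hn (fun j => C ((j : ZMod n) + 1)) (fun k => x (k : ZMod n))
    ⟨fun j _ => hC _, fun j hj k hk => ?_⟩
  have key : x (k : ZMod n) ∈ C ((j : ZMod n) + 1) ↔
      (k : ZMod n) = (j : ZMod n) ∨ (k : ZMod n) = (j : ZMod n) + 1 := by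
    constructor
    · intro h
      by_contra hne
      push Not at hne
      exact hnot _ _ (fun e => hne.2 e.symm) (fun e => hne.1 (add_right_cancel e).symm) h
    · rintro (h | h)
      · rw [h]; exact (hmem _).2
      · rw [h]; exact (hmem _).1
  rw [key, natCast_eq_succ_iff hj hk, ZMod.natCast_eq_natCast_iff', Nat.mod_eq_of_lt hk,
    Nat.mod_eq_of_lt hj]

end TransitPaper
end

section
/- Every pyramidal transit function R on a finite nonempty set V satisfies axiom (u3). -/
/-!
Let `x < y` in an order for which all transit sets are intervals. If `R x y` contains some `z`
outside the segment `[x, y]`, say `z < x`, then `R z y` is an interval containing `z` and `y`,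
so it contains `x`, and monotonicity gives `R x y ⊆ R z y`; the case `y < z` is symmetric.
Otherwise `R x y = [x, y]`, and for any `z` strictly inside, `R x z ⊇ [x, z]` and
`R z y ⊇ [z, y]` already cover it. The inclusion `R x z ∪ R z y ⊆ R x y` is monotonicity.
-/

namespace TransitPaper

variable {V : Type*}

/-- Axiom (u3) for a pair with `x < y`; the other orientation follows by symmetry of `R`. -/
theorem exists_split_of_lt {R : V → V → Set V} (htf : IsTransit R) (hm : IsMonotone R)
    {lt : V → V → Prop} (hlt : IsStrictTotalOrder V lt)
    (hint : ∀ u v, IsIntervalWrt lt (R u v)) {x y : V} (hxy : lt x y)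
    (h : ¬ R x y ⊆ {x, y}) :
    ∃ z ∈ R x y, z ≠ x ∧ z ≠ y ∧ R x z ∪ R z y = R x y := by
  obtain ⟨t1, t2, -⟩ := htf
  have right_mem : ∀ u v, v ∈ R u v := fun u v => t2 u v ▸ t1 v u
  -- Monotonicity gives one inclusion for every `z ∈ R x y`.
  have split : ∀ z ∈ R x y, R x y ⊆ R x z ∪ R z y → R x z ∪ R z y = R x y := fun z hz hsub =>
    (Set.union_subset (hm _ _ _ _ (t1 x y) hz) (hm _ _ _ _ hz (right_mem x y))).antisymm hsub
  have irrefl : ∀ a, ¬ lt a a := fun a => irrefl_of lt a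
  by_cases hl : ∃ z ∈ R x y, lt z x
  · obtain ⟨z, hz, hzx⟩ := hl
    refine ⟨z, hz, ?_, ?_, split z hz ?_⟩
    · rintro rfl
      exact irrefl _ hzx
    · rintro rfl
      exact irrefl _ (trans_of lt hzx hxy)
    · -- From `z < x < y` the interval `R z y` contains both `x` and `y`, hence all of `R x y`.
      exact (hm z y x y (hint z y z (t1 z y) y (right_mem z y) x hzx hxy)
        (right_mem z y)).trans Set.subset_union_right
  by_cases hr : ∃ z ∈ R x y, lt y z
  · obtain ⟨z, hz, hyz⟩ := hr
    refine ⟨z, hz, ?_, ?_, split z hz ?_⟩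
    · rintro rfl
      exact irrefl _ (trans_of lt hyz hxy)
    · rintro rfl
      exact irrefl _ hyz
    · exact (hm x z x y (t1 x z)
        (hint x z x (t1 x z) z (right_mem x z) y hxy hyz)).trans Set.subset_union_left
  -- Now `R x y` is exactly the closed segment from `x` to `y`, so any inner point splits it.
  obtain ⟨z, hz, hzn⟩ := Set.not_subset.mp h
  simp only [Set.mem_insert_iff, Set.mem_singleton_iff, not_or] at hzn
  refine ⟨z, hz, hzn.1, hzn.2, split z hz fun w hw => ?_⟩
  rcases trichotomous_of lt x w with hxw | rfl | hwx
  · rcases trichotomous_of lt w y with hwy | rfl | hyw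
    · rcases trichotomous_of lt w z with hwz | rfl | hzw
      · exact Or.inl (hint x z x (t1 x z) z (right_mem x z) w hxw hwz)
      · exact Or.inl (right_mem x w)
      · exact Or.inr (hint z y z (t1 z y) y (right_mem z y) w hzw hwy)
    · exact Or.inr (right_mem z w)
    · exact (hr ⟨w, hw, hyw⟩).elim
  · exact Or.inl (t1 x z)
  · exact (hl ⟨w, hw, hwx⟩).elim

/-- Every pyramidal transit function satisfies (u3). -/
theorem stmt_18 {V : Type*} [Fintype V] [Nonempty V] (R : V → V → Set V)
    (htf : IsTransit R) (hpy : IsPyramidal R) :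
    AxU3 R := by
  obtain ⟨hm, lt, hlt, hint⟩ := hpy
  intro x y h
  rcases trichotomous_of lt x y with hxy | rfl | hyx
  · exact exists_split_of_lt htf hm hlt hint hxy h
  · exact (h (by simp [htf.2.2 x])).elim
  · rw [htf.2.1 x y, Set.pair_comm] at h
    obtain ⟨z, hz, hzy, hzx, heq⟩ := exists_split_of_lt htf hm hlt hint hyx h
    refine ⟨z, htf.2.1 y x ▸ hz, hzx, hzy, ?_⟩
    rw [htf.2.1 x z, htf.2.1 z y, htf.2.1 x y, Set.union_comm, heq]

end TransitPaper
end

section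
/- Let R be a monotone transit function on a finite nonempty set V satisfying axiom (p4). Then R satisfies axiom (wp). -/
/-!
Write `A`, `B`, `C` for the three pairwise intersecting transit sets, and suppose that each has a
point (`a`, `b`, `c`) outside the union of the other two. Only the case `n = 3` of (p4) is used,
in the form `three_point`: a path `s, w, t` whose first leg lies in `B` and second leg in `C`,
both legs meeting `A`, with `s ∉ C` and `t ∉ B`, forces `w` and one of `s`, `t` into `A`;
the point `a` plays the role of `y`.

If some `z` lies in `A ∩ B ∩ C`, the path `b, z, c` puts `b` or `c` into `A`. Otherwise take
`s ∈ A ∩ B`, `t ∈ A ∩ C`, `w ∈ B ∩ C`; the path `s, w, t` puts `w` into `A`. Both are absurd.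
-/

namespace TransitPaper

variable {V : Type*}

/-- The case `n = 3` of (p4) for a path whose two legs lie, by monotonicity, in the transit sets
`R x y` and `R p q`. -/
theorem three_point {V : Type*} {R : V → V → Set V}
    (htf : IsTransit R) (hm : IsMonotone R) (hp4 : AxP4 R) {u v x y p q a s w t : V}
    (ha : a ∈ R u v) (hax : a ∉ R x y) (hap : a ∉ R p q)
    (hs : s ∈ R x y) (hsp : s ∉ R p q) (hwx : w ∈ R x y) (hwp : w ∈ R p q)
    (ht : t ∈ R p q) (htx : t ∉ R x y)
    (h1 : (R u v ∩ R s w).Nonempty) (h2 : (R u v ∩ R w t).Nonempty) :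
    w ∈ R u v ∧ (s ∈ R u v ∨ t ∈ R u v) := by
  obtain ⟨left_mem, symm, -⟩ := htf
  have right_mem : ∀ c d, d ∈ R c d := fun c d => symm d c ▸ left_mem d c
  have hB : R s w ⊆ R x y := hm _ _ _ _ hs hwx
  have hC : R w t ⊆ R p q := hm _ _ _ _ hwp ht
  have key := hp4 3 le_rfl u v a (fun i => if i = 1 then s else if i = 2 then w else t)
    (by
      intro i j hi1 hi3 hj1 hj3 hne hne'
      have hij : (i = 1 ∧ j = 2) ∨ (i = 3 ∧ j = 1) := by omega
      rcases hij with ⟨rfl, rfl⟩ | ⟨rfl, rfl⟩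
      · simpa using fun h => hsp (hC h)
      · simpa using fun h => htx (hB h))
    (by simpa using h1) (by simpa using h2)
    (by
      intro i hi1 hi3
      have hi : i = 1 ∨ i = 2 := by omega
      rcases hi with rfl | rfl
      · simpa using ⟨ha, fun h => hax (hB h)⟩
      · simpa using ⟨ha, fun h => hap (hC h)⟩)
  have key' : R s w ⊆ R u v ∨ R w t ⊆ R u v := by simpa using key
  rcases key' with h | h
  · exact ⟨h (right_mem _ _), Or.inl (h (left_mem _ _))⟩
  · exact ⟨h (left_mem _ _), Or.inr (h (right_mem _ _))⟩

/-- A monotone transit function satisfying (p4) satisfies (wp). -/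
theorem stmt_19 {V : Type*} [Fintype V] [Nonempty V] (R : V → V → Set V)
    (htf : IsTransit R) (hm : IsMonotone R) (hp4 : AxP4 R) :
    AxWP R := by
  have left_mem := htf.1
  have right_mem : ∀ c d, d ∈ R c d := fun c d => htf.2.1 d c ▸ htf.1 d c
  rintro u v x y p q ⟨s, hsu, hsx⟩ ⟨t, htu, htp⟩ ⟨w, hwx, hwp⟩
  by_contra hcon
  simp only [not_or, Set.not_subset, Set.mem_union] at hcon
  obtain ⟨⟨c, hcp, hcu, hcx⟩, ⟨a, hau, hap, hax⟩, ⟨b, hbx, hbp, hbu⟩⟩ := hcon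
  have no_common : ∀ z, z ∈ R u v → z ∈ R x y → z ∉ R p q := by
    intro z hzu hzx hzp
    rcases (three_point htf hm hp4 hau hax hap hbx hbp hzx hzp hcp hcx
      ⟨z, hzu, right_mem _ _⟩ ⟨z, hzu, left_mem _ _⟩).2 with h | h
    · exact hbu h
    · exact hcu h
  have hwu : w ∈ R u v :=
    (three_point htf hm hp4 hau hax hap hsx (no_common s hsu hsx) hwx hwp htp
      (fun h => no_common t htu h htp)
      ⟨s, hsu, left_mem _ _⟩ ⟨t, htu, right_mem _ _⟩).1
  exact no_common w hwu hwx hwp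

end TransitPaper
end
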